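/- For every complex s with Re(s) > 1, ∑'_{(m,k)} 1/(m² + 15k²)^s = (1 − 2^{1−s} + 2^{1−2s})·ζ(s)·L(χ_{-15}, s) + (1 + 2^{1−s} + 2^{1−2s})·L(χ_{-3}, s)·L(χ_5, s), where ζ is the Riemann zeta function. -/

import Mathlib

/-- The quadratic Dirichlet character modulo 3:
`χ₋₃(n) = 1` if `n ≡ 1 (mod 3)`, `-1` if `n ≡ 2 (mod 3)`, `0` if `3 ∣ n`. -/
def chiNeg3 (n : ℕ) : ℤ :=
  if n % 3 = 1 then 1 else if n % 3 = 2 then -1 else 0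

/-- The quadratic Dirichlet character modulo 5 given by the Legendre symbol `(n/5)`. -/
def chi5 (n : ℕ) : ℤ :=
  if n % 5 = 1 ∨ n % 5 = 4 then 1 else if n % 5 = 2 ∨ n % 5 = 3 then -1 else 0

/-- The quadratic Dirichlet character modulo 15, `χ₋₁₅(n) = (n/3)·(n/5)`. -/
def chiNeg15 (n : ℕ) : ℤ := chiNeg3 n * chi5 n

/-- The Dirichlet `L`-series `L(χ, s) = ∑_{n ≥ 1} χ(n) n^{-s}`. -/
noncomputable def LSer (χ : ℕ → ℤ) (s : ℂ) : ℂ :=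
  ∑' n : ℕ, (χ (n + 1) : ℂ) / ((n : ℂ) + 1) ^ s

/-!
The forms of discriminant `-15` fall into two classes, `x² + x y + 4 y²` and `2 x² + x y + 2 y²`,
which are told apart by a genus character. For a prime `p`, counting pairs of a representation of
`p n` by `f` and a root of `f` modulo `p` gives the Hecke relation
`r_f(p n) + (ν - 1) r_f(n / p) = ∑ r_g(n)`, the sum running over the `ν = 1 + χ₋₁₅(p)`
`p`-neighbours `g` of `f`; the genus character of `p` decides to which class all of them belong.
The coefficients of `ζ(s) L(χ₋₁₅, s)` and `L(χ₋₃, s) L(χ₅, s)` are convolutions of completely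
multiplicative functions, so they satisfy recursions of the same shape, and by induction on `n` the
two representation numbers are their sum and their difference. Finally, `x² + 15 y²` is
`x² + x y + 4 y²` restricted to the lattice of even `y`, which produces the Euler factors at `2`.
-/

open Finset

/-! ### Binary quadratic forms -/

section BinaryForms

variable {R : Type*} [CommRing R]

/-- The binary quadratic form `a x² + b x y + c y²`. -/
def binForm (a b c : R) : QuadraticForm R (R × R) :=
  a • QuadraticMap.linMulLin (.fst R R R) (.fst R R R) +
    b • QuadraticMap.linMulLin (.fst R R R) (.snd R R R) +
    c • QuadraticMap.linMulLin (.snd R R R) (.snd R R R)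

lemma binForm_apply (a b c : R) (z : R × R) :
    binForm a b c z = a * z.1 ^ 2 + b * z.1 * z.2 + c * z.2 ^ 2 := by
  simp [binForm]
  ring

lemma four_mul_mul_binForm (a b c : R) (z : R × R) :
    4 * a * binForm a b c z = (2 * a * z.1 + b * z.2) ^ 2 - discrim a b c * z.2 ^ 2 := by
  rw [binForm_apply, discrim]
  ring

lemma binForm_swap_apply (a b c : R) (z : R × R) : binForm c b a z.swap = binForm a b c z := by
  simp only [binForm_apply, Prod.fst_swap, Prod.snd_swap]
  ring

lemma binForm_equivalent_swap (a b c : R) : (binForm a b c).Equivalent (binForm c b a) :=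
  ⟨{ LinearEquiv.prodComm R R R with
      map_app' := binForm_swap_apply a b c }⟩

lemma binForm_equivalent_neg (a b c : R) : (binForm a b c).Equivalent (binForm a (-b) c) :=
  ⟨{ (LinearEquiv.refl R R).prodCongr (LinearEquiv.neg R) with
      map_app' := fun z ↦ by
        change binForm a (-b) c (z.1, -z.2) = _
        simp only [binForm_apply]
        ring }⟩

lemma binForm_equivalent_translate (a b c k : R) :
    (binForm a b c).Equivalent (binForm a (b + 2 * a * k) (a * k ^ 2 + b * k + c)) :=
  ⟨{ toFun := fun z ↦ (z.1 - k * z.2, z.2)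
     invFun := fun z ↦ (z.1 + k * z.2, z.2)
     map_add' := fun z w ↦ by ext <;> (simp; try ring)
     map_smul' := fun r z ↦ by ext <;> (simp; try ring)
     left_inv := fun z ↦ by simp
     right_inv := fun z ↦ by simp
     map_app' := fun z ↦ by
        simp only [binForm_apply]
        ring }⟩

lemma discrim_swap (a b c : R) : discrim c b a = discrim a b c := by
  simp only [discrim]
  ring

lemma discrim_translate (a b c k : R) :
    discrim a (b + 2 * a * k) (a * k ^ 2 + b * k + c) = discrim a b c := by
  simp only [discrim]
  ring

lemma exists_equivalent_binForm_not_dvd {p a b c : R} (h : ¬(p ∣ a ∧ p ∣ b ∧ p ∣ c)) :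
    ∃ a' b' c', ¬p ∣ a' ∧ discrim a' b' c' = discrim a b c ∧
      (binForm a b c).Equivalent (binForm a' b' c') := by
  by_cases ha : p ∣ a
  · by_cases hc : p ∣ c
    · have hb : ¬p ∣ b := fun hb ↦ h ⟨ha, hb, hc⟩
      have habc : ¬p ∣ a * 1 ^ 2 + b * 1 + c := by
        simpa [dvd_add_left hc, dvd_add_right ha] using hb
      exact ⟨_, _, _, habc, (discrim_swap ..).trans (discrim_translate a b c 1),
        (binForm_equivalent_translate a b c 1).trans (binForm_equivalent_swap ..)⟩
    · exact ⟨c, b, a, hc, discrim_swap a b c, binForm_equivalent_swap a b c⟩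
  · exact ⟨a, b, c, ha, rfl, .refl _⟩

end BinaryForms

section PositiveDefinite

lemma posDef_of_equivalent {R M₁ M₂ : Type*} [CommRing R] [PartialOrder R]
    [AddCommGroup M₁] [AddCommGroup M₂]
    [Module R M₁] [Module R M₂] {Q₁ : QuadraticForm R M₁} {Q₂ : QuadraticForm R M₂}
    (h : Q₁.Equivalent Q₂) (hQ : Q₁.PosDef) : Q₂.PosDef := by
  obtain ⟨e⟩ := h.symm
  intro z hz
  rw [← e.map_app]
  exact hQ _ (e.toLinearEquiv.map_ne_zero_iff.2 hz)

variable {R : Type*} [CommRing R] [LinearOrder R] [IsStrictOrderedRing R] {a b c : R}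

lemma binForm_posDef_iff : (binForm a b c).PosDef ↔ 0 < a ∧ discrim a b c < 0 := by
  constructor
  · intro h
    have ha : 0 < a := by simpa [binForm_apply] using h (1, 0) (by simp)
    have hval : 0 < a * -discrim a b c := by
      have := h (-b, 2 * a) (by simp [ha.ne'])
      rw [binForm_apply] at this
      rw [discrim]
      linarith
    exact ⟨ha, neg_pos.1 (pos_of_mul_pos_right hval ha.le)⟩
  · rintro ⟨ha, hD⟩ z hz
    have hsq := four_mul_mul_binForm a b c z
    refine pos_of_mul_pos_right (a := 4 * a) ?_ (by positivity)
    rw [hsq]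
    rcases eq_or_ne z.2 0 with hy | hy
    · have hx : z.1 ≠ 0 := fun hx ↦ hz (Prod.ext hx hy)
      have hax : 2 * a * z.1 ≠ 0 := by positivity
      simpa [hy] using sq_pos_of_ne_zero hax
    · have := mul_neg_of_neg_of_pos hD (by positivity : 0 < z.2 ^ 2)
      have := sq_nonneg (2 * a * z.1 + b * z.2)
      linarith

end PositiveDefinite

lemma abs_snd_le_four_mul_binForm {a b c : ℤ} (h : (binForm a b c).PosDef) (z : ℤ × ℤ) :
    |z.2| ≤ 4 * a * binForm a b c z := by
  have hD := (binForm_posDef_iff.1 h).2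
  calc
    |z.2| ≤ z.2 ^ 2 := (Int.abs_eq_natAbs _).trans_le (Int.natAbs_le_self_sq _)
    _ ≤ 4 * a * binForm a b c z := by
      rw [four_mul_mul_binForm]
      nlinarith [sq_nonneg (2 * a * z.1 + b * z.2), sq_nonneg z.2]

lemma finite_setOf_binForm_eq {a b c : ℤ} (h : (binForm a b c).PosDef) (n : ℤ) :
    {z | binForm a b c z = n}.Finite := by
  have hswap := posDef_of_equivalent (binForm_equivalent_swap a b c) h
  refine ((Set.finite_Icc (-(4 * c * n)) (4 * c * n)).prod
    (Set.finite_Icc (-(4 * a * n)) (4 * a * n))).subset ?_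
  rintro z rfl
  have hx := abs_snd_le_four_mul_binForm hswap z.swap
  rw [binForm_swap_apply, Prod.snd_swap] at hx
  exact ⟨abs_le.1 hx, abs_le.1 (abs_snd_le_four_mul_binForm h z)⟩

lemma exists_equivalent_binForm_reduced {a b c : ℤ} (h : (binForm a b c).PosDef) :
    ∃ a' b' c', (binForm a b c).Equivalent (binForm a' b' c') ∧
      discrim a' b' c' = discrim a b c ∧ |b'| ≤ a' ∧ a' ≤ c' := by
  induction hm : a.toNat using Nat.strong_induction_on generalizing a b c with
  | _ m ih =>
  have ha : 0 < a := (binForm_posDef_iff.1 h).1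
  obtain ⟨k, hk⟩ : ∃ k, |b + 2 * a * k| ≤ a := by
    refine ⟨-((b + a) / (2 * a)), abs_le.2 ?_⟩
    have := Int.emod_nonneg (b + a) (b := 2 * a) (by omega)
    have := Int.emod_lt_of_pos (b + a) (b := 2 * a) (by omega)
    have := Int.emod_add_mul_ediv (b + a) (2 * a)
    constructor <;> linarith
  have hequiv := binForm_equivalent_translate a b c k
  have hdisc := discrim_translate a b c k
  set b₁ := b + 2 * a * k
  set c₁ := a * k ^ 2 + b * k + c
  rcases le_or_gt a c₁ with hac | hca
  · exact ⟨a, b₁, c₁, hequiv, hdisc, hk, hac⟩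
  · have hswap := hequiv.trans (binForm_equivalent_swap a b₁ c₁)
    obtain ⟨a', b', c', hequiv', hdisc', hred⟩ :=
      ih c₁.toNat (by omega) (posDef_of_equivalent hswap h) rfl
    exact ⟨a', b', c', hswap.trans hequiv', by rw [hdisc', discrim_swap, hdisc], hred⟩

/-! ### Representation numbers and neighbours -/

section Counting

variable {M M₁ M₂ : Type*} [AddCommGroup M] [AddCommGroup M₁] [AddCommGroup M₂]

/-- The number of representations of `n` by the integral quadratic form `Q`
(with the junk value `0` when there are infinitely many). -/
noncomputable def repCount (Q : QuadraticForm ℤ M) (n : ℕ) : ℕ := {z | Q z = n}.ncard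

lemma repCount_eq_of_equivalent {Q₁ : QuadraticForm ℤ M₁} {Q₂ : QuadraticForm ℤ M₂}
    (h : Q₁.Equivalent Q₂) : repCount Q₁ = repCount Q₂ := by
  obtain ⟨e⟩ := h
  ext n
  rw [repCount, repCount, ← Set.ncard_image_of_injective _ e.toLinearEquiv.injective]
  congr 1
  ext z
  refine ⟨?_, fun hz ↦ ⟨e.symm z, ?_, e.toLinearEquiv.apply_symm_apply z⟩⟩
  · rintro ⟨w, hw, rfl⟩
    exact (e.map_app w).trans hw
  · exact (e.symm.map_app z).trans hz

/-- The coefficients of the Dirichlet series `k⁻ˢ ∑ f(n) n⁻ˢ`. -/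
def dilate {R : Type*} [Zero R] (k : ℕ) (f : ℕ → R) (n : ℕ) : R := if k ∣ n then f (n / k) else 0

lemma dilate_mul {R : Type*} [Zero R] {k : ℕ} (hk : k ≠ 0) (f : ℕ → R) (n : ℕ) :
    dilate k f (k * n) = f n := by
  rw [dilate, if_pos (dvd_mul_right k n), Nat.mul_div_cancel_left n (Nat.pos_of_ne_zero hk)]

lemma dilate_mul_mul {R : Type*} [Zero R] {k : ℕ} (hk : k ≠ 0) (l : ℕ) (f : ℕ → R) (n : ℕ) :
    dilate (k * l) f (k * n) = dilate l f n := by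
  simp only [dilate, Nat.mul_dvd_mul_iff_left (Nat.pos_of_ne_zero hk),
    Nat.mul_div_mul_left _ _ (Nat.pos_of_ne_zero hk)]

lemma dilate_of_not_dvd {R : Type*} [Zero R] {k n : ℕ} (h : ¬k ∣ n) (f : ℕ → R) :
    dilate k f n = 0 := if_neg h

end Counting

section QuadraticRoots

variable {F : Type*} [Field F] [Fintype F] [DecidableEq F]

/-- The roots of `a t² + b t + c`. -/
def quadraticRoots (a b c : F) : Finset F := {t | a * (t * t) + b * t + c = 0}

variable {a b c : F}

lemma mem_quadraticRoots {t : F} : t ∈ quadraticRoots a b c ↔ a * (t * t) + b * t + c = 0 := by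
  simp [quadraticRoots]

lemma card_quadraticRoots (hF : ringChar F ≠ 2) (ha : a ≠ 0) :
    (#(quadraticRoots a b c) : ℤ) = 1 + quadraticChar F (discrim a b c) := by
  have : NeZero (2 : F) := ⟨Ring.two_ne_zero hF⟩
  have h2a : 2 * a ≠ 0 := mul_ne_zero two_ne_zero ha
  have hbij : quadraticRoots a b c ≃ {x : F | x ^ 2 = discrim a b c} :=
    ((Equiv.mulLeft₀ (2 * a) h2a).trans (Equiv.addRight b)).subtypeEquiv fun t ↦ by
      simp [mem_quadraticRoots, quadratic_eq_zero_iff_discrim_eq_sq ha, eq_comm]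
  rw [add_comm, ← quadraticChar_card_sqrts hF, Set.toFinset_card, ← Fintype.card_coe,
    Fintype.card_congr hbij]

lemma card_filter_quadraticRoots (ha : a ≠ 0) {x y : F} (h : binForm a b c (x, y) = 0) :
    #{t ∈ quadraticRoots a b c | x = t * y} =
      if y = 0 then #(quadraticRoots a b c) else 1 := by
  rw [binForm_apply] at h
  split_ifs with hy
  · have hx : x = 0 := by simpa [hy, ha] using h
    simp [hx, hy]
  · refine card_eq_one.2 ⟨x / y, ?_⟩
    ext t
    rw [mem_filter, mem_singleton, mem_quadraticRoots, ← div_eq_iff hy, eq_comm (a := t)]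
    refine and_iff_right_of_imp ?_
    rintro rfl
    field_simp
    linear_combination h

end QuadraticRoots

section Hecke

/-- For a root `t` of `a t² + b t + c` modulo `p`, the restriction of `(a x² + b x y + c y²) / p`
to the lattice `x ≡ t y (mod p)` with basis `(p, 0)`, `(t, 1)`. -/
def neighborForm (a b c p t : ℤ) : QuadraticForm ℤ (ℤ × ℤ) :=
  binForm (p * a) (2 * a * t + b) ((a * t ^ 2 + b * t + c) / p)

variable {a b c : ℤ}

lemma mul_neighborForm {p t : ℤ} (ht : p ∣ a * t ^ 2 + b * t + c) (z : ℤ × ℤ) :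
    p * neighborForm a b c p t z = binForm a b c (p * z.1 + t * z.2, z.2) := by
  simp only [neighborForm, binForm_apply]
  linear_combination z.2 ^ 2 * Int.mul_ediv_cancel' ht

lemma discrim_neighborForm {p t : ℤ} (ht : p ∣ a * t ^ 2 + b * t + c) :
    discrim (p * a) (2 * a * t + b) ((a * t ^ 2 + b * t + c) / p) = discrim a b c := by
  simp only [discrim]
  linear_combination -4 * a * Int.mul_ediv_cancel' ht

lemma neighborForm_posDef {p t : ℤ} (h : (binForm a b c).PosDef) (hp : 0 < p)
    (ht : p ∣ a * t ^ 2 + b * t + c) : (neighborForm a b c p t).PosDef := by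
  rw [binForm_posDef_iff] at h
  rw [neighborForm, binForm_posDef_iff, discrim_neighborForm ht]
  exact ⟨mul_pos hp h.1, h.2⟩

lemma repCount_neighborForm {p t : ℤ} (hp : p ≠ 0) (ht : p ∣ a * t ^ 2 + b * t + c) (n : ℕ) :
    repCount (neighborForm a b c p t) n =
      {z : ℤ × ℤ | binForm a b c z = p * n ∧ p ∣ z.1 - t * z.2}.ncard := by
  have hinj : Function.Injective fun z : ℤ × ℤ ↦ (p * z.1 + t * z.2, z.2) := by
    rintro ⟨x, y⟩ ⟨x', y'⟩ h
    obtain ⟨hx, rfl⟩ := Prod.ext_iff.1 h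
    simpa [hp] using hx
  rw [repCount, ← Set.ncard_image_of_injective _ hinj]
  congr 1
  ext ⟨x, y⟩
  constructor
  · rintro ⟨z, hz, hxy⟩
    obtain ⟨rfl, rfl⟩ := Prod.ext_iff.1 hxy
    refine ⟨?_, z.1, by ring⟩
    rw [← mul_neighborForm ht, hz]
  · rintro ⟨hz, u, hu⟩
    have hx : p * u + t * y = x := by linarith
    refine ⟨(u, y), mul_left_cancel₀ hp ?_, by simp [hx]⟩
    rw [mul_neighborForm ht, hx, hz]

lemma exists_smul_eq_of_binForm_eq_mul {p : ℤ} (hp : Prime p) (ha : ¬p ∣ a) {n : ℤ}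
    {z : ℤ × ℤ} (hz : binForm a b c z = p * n) (hy : p ∣ z.2) :
    ∃ w, p • w = z ∧ p * binForm a b c w = n := by
  obtain ⟨x, y⟩ := z
  obtain ⟨v, rfl⟩ := hy
  rw [binForm_apply] at hz
  obtain ⟨u, rfl⟩ : p ∣ x := by
    refine hp.dvd_of_dvd_pow ((hp.dvd_or_dvd (a := a) (b := x ^ 2) ?_).resolve_left ha)
    exact ⟨n - b * x * v - c * v * (p * v), by linear_combination hz⟩
  refine ⟨(u, v), by simp, mul_left_cancel₀ hp.ne_zero ?_⟩
  rw [binForm_apply]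
  linear_combination hz

lemma ncard_binForm_eq_and_dvd_snd {p : ℕ} (hp : p.Prime) (ha : ¬(p : ℤ) ∣ a) (n : ℕ) :
    {z : ℤ × ℤ | binForm a b c z = p * n ∧ (p : ℤ) ∣ z.2}.ncard =
      dilate p (repCount (binForm a b c)) n := by
  have hp' : Prime (p : ℤ) := Nat.prime_iff_prime_int.1 hp
  by_cases hn : p ∣ n
  · obtain ⟨m, rfl⟩ := hn
    rw [dilate_mul hp.ne_zero, repCount, eq_comm,
      ← Set.ncard_image_of_injective _ (smul_right_injective (ℤ × ℤ) hp'.ne_zero)]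
    congr 1
    ext z
    constructor
    · rintro ⟨w, hw, rfl⟩
      rw [Set.mem_ofPred_eq] at hw
      refine ⟨?_, by simp⟩
      rw [QuadraticMap.map_smul, hw, smul_eq_mul, Nat.cast_mul, mul_assoc]
    · rintro ⟨hz, hy⟩
      obtain ⟨w, hw, hwn⟩ := exists_smul_eq_of_binForm_eq_mul hp' ha hz hy
      exact ⟨w, mul_left_cancel₀ hp'.ne_zero (by simpa using hwn), hw⟩
  · rw [dilate_of_not_dvd hn]
    convert Set.ncard_empty (ℤ × ℤ)
    refine Set.eq_empty_of_forall_notMem fun z ⟨hz, hy⟩ ↦ hn ?_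
    obtain ⟨w, -, hwn⟩ := exists_smul_eq_of_binForm_eq_mul hp' ha hz hy
    exact Int.natCast_dvd_natCast.1 ⟨_, hwn.symm⟩

variable {p : ℕ} [Fact p.Prime]

lemma dvd_of_mem_quadraticRoots {t : ZMod p} (ht : t ∈ quadraticRoots (a : ZMod p) b c) :
    (p : ℤ) ∣ a * (t.val : ℤ) ^ 2 + b * t.val + c := by
  rw [mem_quadraticRoots] at ht
  rw [← ZMod.intCast_zmod_eq_zero_iff_dvd]
  simpa [sq] using ht

lemma repCount_neighborForm_val {t : ZMod p} (ht : t ∈ quadraticRoots (a : ZMod p) b c) (n : ℕ) :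
    repCount (neighborForm a b c p t.val) n =
      {z : ℤ × ℤ | binForm a b c z = p * n ∧ (z.1 : ZMod p) = t * z.2}.ncard := by
  rw [repCount_neighborForm (mod_cast (Fact.out : p.Prime).ne_zero) (dvd_of_mem_quadraticRoots ht)]
  simp [← ZMod.intCast_zmod_eq_zero_iff_dvd, sub_eq_zero]

lemma card_filter_quadraticRoots_intCast (ha : ¬(p : ℤ) ∣ a) {n : ℤ} {z : ℤ × ℤ}
    (hz : binForm a b c z = p * n) :
    (#{t ∈ quadraticRoots (a : ZMod p) b c | (z.1 : ZMod p) = t * z.2} : ℤ) =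
      1 + if (p : ℤ) ∣ z.2 then (#(quadraticRoots (a : ZMod p) b c) - 1 : ℤ) else 0 := by
  have hz0 : binForm (a : ZMod p) b c (z.1, z.2) = 0 := by
    simpa [binForm_apply] using congr_arg (Int.cast : ℤ → ZMod p) hz
  rw [← ZMod.intCast_zmod_eq_zero_iff_dvd] at ha
  simp only [card_filter_quadraticRoots ha hz0, ← ZMod.intCast_zmod_eq_zero_iff_dvd]
  split_ifs <;> simp

/-- Count the pairs `(t, z)` with `f(z) = p n` and `z.1 = t z.2` modulo `p` in two ways. -/
theorem repCount_prime_mul (h : (binForm a b c).PosDef) (ha : ¬(p : ℤ) ∣ a) (n : ℕ) :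
    (repCount (binForm a b c) (p * n) : ℤ) +
        (#(quadraticRoots (a : ZMod p) b c) - 1) * dilate p (repCount (binForm a b c)) n =
      ∑ t ∈ quadraticRoots (a : ZMod p) b c, (repCount (neighborForm a b c p t.val) n : ℤ) := by
  have hfin := finite_setOf_binForm_eq h (p * n)
  have hcard (P : ℤ × ℤ → Prop) [DecidablePred P] :
      #{z ∈ hfin.toFinset | P z} = {z | binForm a b c z = p * n ∧ P z}.ncard := by
    rw [← Set.ncard_coe_finset]
    congr 1
    ext z
    simp
  calc
    _ = (#hfin.toFinset : ℤ) + ∑ z ∈ hfin.toFinset,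
          if (p : ℤ) ∣ z.2 then (#(quadraticRoots (a : ZMod p) b c) - 1 : ℤ) else 0 := by
      rw [← sum_filter, sum_const, hcard, ncard_binForm_eq_and_dvd_snd Fact.out ha, nsmul_eq_mul,
        mul_comm (_ - _), repCount, Nat.cast_mul, Set.ncard_eq_toFinset_card _ hfin]
    _ = ∑ z ∈ hfin.toFinset,
          (#{t ∈ quadraticRoots (a : ZMod p) b c | (z.1 : ZMod p) = t * z.2} : ℤ) := by
      rw [sum_congr rfl fun z hz ↦
        card_filter_quadraticRoots_intCast ha (hfin.mem_toFinset.1 hz), sum_add_distrib]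
      simp
    _ = ∑ t ∈ quadraticRoots (a : ZMod p) b c,
          (#{z ∈ hfin.toFinset | (z.1 : ZMod p) = t * z.2} : ℤ) :=
      mod_cast (sum_card_bipartiteAbove_eq_sum_card_bipartiteBelow _).symm
    _ = _ := sum_congr rfl fun t ht ↦ by rw [repCount_neighborForm_val ht, hcard]

end Hecke

/-! ### Genus theory in discriminant `-15` -/

section LegendreSymbol

lemma legendreSym_neg_of_mod_four_eq_three {p q : ℕ} [Fact p.Prime] [Fact q.Prime] (hp : p ≠ 2)
    (hq : q % 4 = 3) : legendreSym p (-q) = legendreSym q p := by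
  rw [neg_eq_neg_one_mul, legendreSym.mul, legendreSym.at_neg_one hp]
  have hodd : p % 2 = 1 := (Fact.out : p.Prime).eq_two_or_odd.resolve_left hp
  have hq2 : q ≠ 2 := by omega
  obtain hp4 | hp4 : p % 4 = 1 ∨ p % 4 = 3 := by omega
  · rw [ZMod.χ₄_nat_one_mod_four hp4, one_mul,
      legendreSym.quadratic_reciprocity_one_mod_four hp4 hq2]
  · rw [ZMod.χ₄_nat_three_mod_four hp4, legendreSym.quadratic_reciprocity_three_mod_four hq hp4,
      neg_one_mul, neg_neg]

lemma legendreSym_binForm {p : ℕ} [Fact p.Prime] (hp : p ≠ 2) {a b c : ℤ}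
    (hD : (p : ℤ) ∣ discrim a b c) (ha : ¬(p : ℤ) ∣ a) {z : ℤ × ℤ}
    (hz : ¬(p : ℤ) ∣ binForm a b c z) : legendreSym p (binForm a b c z) = legendreSym p a := by
  have h2 : (2 : ZMod p) ≠ 0 := Ring.two_ne_zero (by rwa [ZMod.ringChar_zmod_n])
  rw [← ZMod.intCast_zmod_eq_zero_iff_dvd] at hD ha hz
  have hsq : IsSquare ((a * binForm a b c z : ℤ) : ZMod p) := by
    have h := congr_arg (Int.cast : ℤ → ZMod p) (four_mul_mul_binForm a b c z)
    rw [Int.cast_sub, Int.cast_mul (discrim a b c), hD] at h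
    push_cast at h ⊢
    refine ⟨(2 * a * z.1 + b * z.2) / 2, ?_⟩
    field_simp
    linear_combination h
  have hmul : legendreSym p a * legendreSym p (binForm a b c z) = 1 := by
    rw [← legendreSym.mul, legendreSym.eq_one_iff _ (by simpa using ⟨ha, hz⟩)]
    exact hsq
  rcases legendreSym.eq_one_or_neg_one p ha with h | h <;> rw [h] at hmul ⊢ <;> linarith

instance fact_prime_five : Fact (Nat.Prime 5) := ⟨Nat.prime_five⟩

/-- The Legendre symbol `(· / p)` as a multiplicative function on `ℕ`. -/
def legendreHom (p : ℕ) [Fact p.Prime] : ℕ →* ℤ :=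
  (legendreSym.hom p : ℤ →* ℤ).comp (Nat.castRingHom ℤ : ℕ →* ℤ)

lemma legendreHom_apply (p : ℕ) [Fact p.Prime] (n : ℕ) : legendreHom p n = legendreSym p n := rfl

lemma chiNeg3_eq_legendreHom : chiNeg3 = legendreHom 3 := by
  ext n
  rw [legendreHom_apply, legendreSym.mod, ← Int.natCast_mod, chiNeg3]
  have := n.mod_lt three_pos
  interval_cases n % 3 <;> decide

lemma chi5_eq_legendreHom : chi5 = legendreHom 5 := by
  ext n
  rw [legendreHom_apply, legendreSym.mod, ← Int.natCast_mod, chi5]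
  have := n.mod_lt (by norm_num : 0 < 5)
  interval_cases n % 5 <;> decide

lemma legendreHom_eq_zero_iff {p n : ℕ} [Fact p.Prime] : legendreHom p n = 0 ↔ p ∣ n := by
  rw [legendreHom_apply, legendreSym.eq_zero_iff, Int.cast_natCast, ZMod.natCast_eq_zero_iff]

lemma legendreHom_three_mul_legendreHom_five {p : ℕ} [Fact p.Prime] (hp : p ≠ 2) :
    legendreHom 3 p * legendreHom 5 p = legendreSym p (-15) := by
  rw [show (-15 : ℤ) = -(3 : ℕ) * (5 : ℕ) by norm_num, legendreSym.mul,
    legendreSym_neg_of_mod_four_eq_three hp rfl,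
    legendreSym.quadratic_reciprocity_one_mod_four rfl hp]
  rfl

end LegendreSymbol

section Genus

lemma card_quadraticRoots_two {a b c : ℤ} (hD : discrim a b c = -15) (ha : ¬2 ∣ a) :
    #(quadraticRoots (a : ZMod 2) b c) = 2 := by
  rw [discrim] at hD
  have hodd : Odd a := Int.not_even_iff_odd.1 (mt Even.two_dvd ha)
  have hb : Odd b := by
    rw [← Int.odd_pow' two_ne_zero (n := 2)]
    exact ⟨2 * (a * c) - 8, by linarith⟩
  have hc : Even c := by
    have h8 := Int.eight_dvd_sq_sub_one_of_odd hb
    have hac : Even (a * c) := by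
      rw [even_iff_two_dvd]
      rw [mul_assoc] at hD
      omega
    exact (Int.even_mul.1 hac).resolve_left (Int.not_even_iff_odd.2 hodd)
  rw [ZMod.intCast_eq_one_iff_odd.2 hodd, ZMod.intCast_eq_one_iff_odd.2 hb,
    ZMod.intCast_eq_zero_iff_even.2 hc]
  decide

lemma card_quadraticRoots_of_discrim_eq {p : ℕ} [Fact p.Prime] {a b c : ℤ}
    (hD : discrim a b c = -15) (ha : ¬(p : ℤ) ∣ a) :
    (#(quadraticRoots (a : ZMod p) b c) : ℤ) = 1 + legendreHom 3 p * legendreHom 5 p := by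
  rcases eq_or_ne p 2 with rfl | hp
  · have h3 : legendreHom 3 2 = -1 := by decide
    have h5 : legendreHom 5 2 = -1 := by decide
    rw [card_quadraticRoots_two hD ha, h3, h5]
    norm_num
  · rw [← ZMod.intCast_zmod_eq_zero_iff_dvd] at ha
    rw [card_quadraticRoots (by rwa [ZMod.ringChar_zmod_n]) ha,
      legendreHom_three_mul_legendreHom_five hp, legendreSym, ← hD]
    simp [discrim]

/-- The nontrivial genus character of the forms of discriminant `-15`, evaluated at a number
`n` represented by the form: `(n/3)`, or `(n/5)` where `(n/3)` vanishes. -/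
def genusSign (n : ℕ) : ℤ := if 3 ∣ n then legendreHom 5 n else legendreHom 3 n

lemma genusSign_mul {a : ℕ} (ha : ¬3 ∣ a) (h : legendreHom 3 a = legendreHom 5 a) (n : ℕ) :
    genusSign (n * a) = genusSign n * genusSign a := by
  simp only [genusSign, Nat.prime_three.dvd_mul, ha, or_false, map_mul, h]
  split_ifs <;> simp

lemma one_add_mul_genusSign (n : ℕ) :
    (1 + legendreHom 3 n * legendreHom 5 n) * genusSign n = legendreHom 3 n + legendreHom 5 n := by
  rw [genusSign]
  split_ifs with h
  · rw [legendreHom_eq_zero_iff.2 h]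
    ring
  · have hsq : legendreHom 3 n ^ 2 = 1 := by
      refine legendreSym.sq_one 3 fun h0 ↦ h ?_
      exact legendreHom_eq_zero_iff.1 ((legendreSym.eq_zero_iff 3 n).2 h0)
    linear_combination legendreHom 5 n * hsq

lemma exists_equivalent_binForm_one {a b c : ℤ} (h : (binForm a b c).PosDef)
    (hD : discrim a b c = -15) :
    ∃ α γ : ℕ, α * γ = 4 ∧ α ≤ γ ∧ (binForm a b c).Equivalent (binForm (α : ℤ) 1 γ) := by
  obtain ⟨a', b', c', hequiv, hD', hba, hac⟩ := exists_equivalent_binForm_reduced h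
  rw [hD, discrim] at hD'
  have hb : b' = 1 ∨ b' = -1 := by
    have hb5 : b' ^ 2 ≤ 5 := by nlinarith [sq_abs b', abs_nonneg b']
    have : b' ≤ 2 := by nlinarith
    have : -2 ≤ b' := by nlinarith
    rw [mul_assoc] at hD'
    interval_cases b' <;> omega
  lift a' to ℕ using (abs_nonneg b').trans hba
  lift c' to ℕ using (Int.natCast_nonneg a').trans hac
  refine ⟨a', c', ?_, mod_cast hac, ?_⟩
  · zify
    rcases hb with rfl | rfl <;> linarith
  · rcases hb with rfl | rfl
    · exact hequiv
    · simpa using hequiv.trans (binForm_equivalent_neg ..)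

lemma discrim_one_of_mul_eq_four {a c : ℤ} (h : a * c = 4) : discrim a 1 c = -15 := by
  rw [discrim]
  linarith

lemma eq_one_or_eq_two_of_mul_eq_four {a c : ℕ} (h : a * c = 4) (hac : a ≤ c) :
    a = 1 ∨ a = 2 := by
  have : a ≤ 2 := by nlinarith
  interval_cases a <;> omega

lemma genusSign_eq_of_binForm_eq {a c : ℕ} (h : a * c = 4) (hac : a ≤ c) {n : ℕ}
    (hn : ¬15 ∣ n) {z : ℤ × ℤ} (hz : binForm (a : ℤ) 1 c z = n) : genusSign n = genusSign a := by
  have hD : discrim (a : ℤ) 1 c = -15 := discrim_one_of_mul_eq_four (mod_cast h)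
  have hlegendre {p : ℕ} [Fact p.Prime] (hp : p ≠ 2) (hpD : p ∣ 15) (hpa : ¬p ∣ a)
      (hpn : ¬p ∣ n) : legendreHom p n = legendreHom p a := by
    rw [← Int.natCast_dvd_natCast] at hpa hpn
    rw [legendreHom_apply, ← hz, legendreHom_apply]
    refine legendreSym_binForm hp ?_ hpa (by rwa [hz])
    simpa [hD] using Int.natCast_dvd_natCast.2 hpD
  have ha := eq_one_or_eq_two_of_mul_eq_four h hac
  have h3a : ¬3 ∣ a := by omega
  have h5a : ¬5 ∣ a := by omega
  rw [genusSign, genusSign, if_neg h3a]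
  split_ifs with h3
  · rw [hlegendre (by decide) (by decide) h5a (by omega)]
    rcases ha with rfl | rfl <;> decide
  · exact hlegendre (by decide) (by decide) h3a h3

end Genus

/-! ### Representation numbers in discriminant `-15` -/

section Convolution

open scoped LSeries.notation

variable {R : Type*}

lemma sum_filter_dvd_fst_divisorsAntidiagonal [AddCommMonoid R] {k : ℕ} (hk : k ≠ 0) (n : ℕ)
    (F : ℕ × ℕ → R) :
    ∑ x ∈ (k * n).divisorsAntidiagonal with k ∣ x.1, F x =
      ∑ x ∈ n.divisorsAntidiagonal, F (k * x.1, x.2) := by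
  symm
  refine sum_nbij (fun x ↦ (k * x.1, x.2)) ?_ ?_ ?_ fun _ _ ↦ rfl
  · simp +contextual [hk, mul_assoc]
  · intro x _ y _ hxy
    simpa [hk, Prod.ext_iff] using hxy
  · rintro ⟨_, e⟩ h
    obtain ⟨h, d, rfl⟩ := mem_filter.1 h
    refine ⟨(d, e), ?_, rfl⟩
    simpa [hk, mul_assoc] using h

lemma sum_filter_not_dvd_fst_divisorsAntidiagonal [AddCommMonoid R] {p : ℕ} (hp : p.Prime) (n : ℕ)
    (F : ℕ × ℕ → R) :
    ∑ x ∈ (p * n).divisorsAntidiagonal with ¬p ∣ x.1, F x =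
      ∑ x ∈ n.divisorsAntidiagonal with ¬p ∣ x.1, F (x.1, p * x.2) := by
  symm
  refine sum_nbij (fun x ↦ (x.1, p * x.2)) ?_ ?_ ?_ fun _ _ ↦ rfl
  · simp +contextual [hp.ne_zero, mul_left_comm]
  · intro x _ y _ hxy
    simpa [hp.ne_zero, Prod.ext_iff] using hxy
  · rintro ⟨d, e⟩ h
    obtain ⟨h, hd⟩ := mem_filter.1 h
    obtain ⟨hde, hn⟩ := Nat.mem_divisorsAntidiagonal.1 h
    obtain ⟨e, rfl⟩ := (hp.dvd_mul.1 ⟨n, hde⟩).resolve_left hd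
    refine ⟨(d, e), ?_, rfl⟩
    simpa [hd, hp.ne_zero, mul_left_comm, right_ne_zero_of_mul hn] using hde

theorem convolution_prime_mul [CommSemiring R] (f g : ℕ →* R) {p : ℕ} (hp : p.Prime) (n : ℕ) :
    (f ⍟ g) (p * n) + f p * g p * dilate p (f ⍟ g) n = (f p + g p) * (f ⍟ g) n := by
  have hdvd : ∑ x ∈ n.divisorsAntidiagonal with p ∣ x.1, f x.1 * g x.2 =
      f p * dilate p (f ⍟ g) n := by
    by_cases hn : p ∣ n
    · obtain ⟨m, rfl⟩ := hn
      rw [sum_filter_dvd_fst_divisorsAntidiagonal hp.ne_zero, dilate_mul hp.ne_zero,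
        LSeries.convolution_def, mul_sum]
      simp [mul_assoc]
    · rw [dilate_of_not_dvd hn, mul_zero]
      refine sum_eq_zero fun x hx ↦ absurd ?_ hn
      obtain ⟨hx, hpx⟩ := mem_filter.1 hx
      exact hpx.trans (Dvd.intro _ (Nat.mem_divisorsAntidiagonal.1 hx).1)
  have hpn : (f ⍟ g) (p * n) = f p * (f ⍟ g) n +
      g p * ∑ x ∈ n.divisorsAntidiagonal with ¬p ∣ x.1, f x.1 * g x.2 := by
    simp only [LSeries.convolution_def]
    rw [← sum_filter_add_sum_filter_not _ (p ∣ ·.1),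
      sum_filter_dvd_fst_divisorsAntidiagonal hp.ne_zero,
      sum_filter_not_dvd_fst_divisorsAntidiagonal hp, mul_sum, mul_sum]
    simp [mul_assoc, mul_left_comm]
  have hn : (f ⍟ g) n = f p * dilate p (f ⍟ g) n +
      ∑ x ∈ n.divisorsAntidiagonal with ¬p ∣ x.1, f x.1 * g x.2 := by
    rw [← hdvd, sum_filter_add_sum_filter_not, LSeries.convolution_def]
  calc
    _ = f p * (f ⍟ g) n + g p * (f p * dilate p (f ⍟ g) n +
          ∑ x ∈ n.divisorsAntidiagonal with ¬p ∣ x.1, f x.1 * g x.2) := by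
      rw [hpn]
      ring
    _ = (f p + g p) * (f ⍟ g) n := by
      rw [← hn]
      ring

end Convolution

section RepresentationNumbers

open scoped LSeries.notation

/-- The coefficients of `ζ(s) L(χ₋₁₅, s)`, the Dedekind zeta function of `ℚ(√-15)`. -/
noncomputable def dedekindCoeff : ℕ → ℤ := ⇑(1 : ℕ →* ℤ) ⍟ ⇑(legendreHom 3 * legendreHom 5)

/-- The coefficients of the genus `L`-function `L(χ₋₃, s) L(χ₅, s)`. -/
noncomputable def genusCoeff : ℕ → ℤ := ⇑(legendreHom 3) ⍟ ⇑(legendreHom 5)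

lemma dedekindCoeff_prime_mul {p : ℕ} (hp : p.Prime) (n : ℕ) :
    dedekindCoeff (p * n) + legendreHom 3 p * legendreHom 5 p * dilate p dedekindCoeff n =
      (1 + legendreHom 3 p * legendreHom 5 p) * dedekindCoeff n := by
  rw [dedekindCoeff]
  simpa using convolution_prime_mul 1 (legendreHom 3 * legendreHom 5) hp n

lemma genusCoeff_prime_mul {p : ℕ} (hp : p.Prime) (n : ℕ) :
    genusCoeff (p * n) + legendreHom 3 p * legendreHom 5 p * dilate p genusCoeff n =
      (legendreHom 3 p + legendreHom 5 p) * genusCoeff n :=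
  convolution_prime_mul (legendreHom 3) (legendreHom 5) hp n

lemma natCast_dilate_eq {f : ℕ → ℕ} {g h : ℕ → ℤ} {x : ℤ} {k n : ℕ}
    (H : k ∣ n → (f (n / k) : ℤ) = g (n / k) + x * h (n / k)) :
    ((dilate k f n : ℕ) : ℤ) = dilate k g n + x * dilate k h n := by
  simp only [dilate]
  split_ifs with hk
  · exact H hk
  · simp

lemma binForm_one_posDef {α γ : ℕ} (h : α * γ = 4) : (binForm (α : ℤ) 1 γ).PosDef := by
  have hα : 0 < α := Nat.pos_of_mul_pos_right (h ▸ four_pos)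
  rw [binForm_posDef_iff, discrim_one_of_mul_eq_four (mod_cast h)]
  exact ⟨mod_cast hα, by norm_num⟩

lemma exists_equivalent_neighborForm {p : ℕ} [Fact p.Prime] {a b c : ℤ} {α γ : ℕ} (h : α * γ = 4)
    (hαγ : α ≤ γ) (hequiv : (binForm (α : ℤ) 1 γ).Equivalent (binForm a b c))
    (hD : discrim a b c = -15) {t : ℤ} (ht : (p : ℤ) ∣ a * t ^ 2 + b * t + c) :
    ∃ α' γ' : ℕ, α' * γ' = 4 ∧ α' ≤ γ' ∧ genusSign α' = genusSign p * genusSign α ∧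
      (neighborForm a b c p t).Equivalent (binForm (α' : ℤ) 1 γ') := by
  have hp : p.Prime := Fact.out
  have hpos : (neighborForm a b c p t).PosDef :=
    neighborForm_posDef (posDef_of_equivalent hequiv (binForm_one_posDef h)) (mod_cast hp.pos) ht
  obtain ⟨α', γ', h', hαγ', ⟨e⟩⟩ :=
    exists_equivalent_binForm_one hpos ((discrim_neighborForm ht).trans hD)
  obtain ⟨z, hz⟩ : ∃ z, binForm (α : ℤ) 1 γ z = (p * α' : ℕ) := by
    obtain ⟨e'⟩ := hequiv.symm
    refine ⟨e' (_, _), (e'.map_app _).trans ((mul_neighborForm ht (e.symm (1, 0))).symm.trans ?_)⟩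
    have he : neighborForm a b c p t (e.symm (1, 0)) = α' :=
      (e.symm.map_app (1, 0)).trans (by simp [binForm_apply])
    rw [he, Nat.cast_mul]
  have hα := eq_one_or_eq_two_of_mul_eq_four h hαγ
  have hα' := eq_one_or_eq_two_of_mul_eq_four h' hαγ'
  have h15 : ¬15 ∣ p * α' := fun h15 ↦ by
    have hcop : Nat.Coprime 15 α' := by rcases hα' with rfl | rfl <;> decide
    rcases (Nat.dvd_prime hp).1 (hcop.dvd_of_dvd_mul_right h15) with h | rfl
    · omega
    · exact absurd hp (by norm_num)
  have hsign : genusSign p * genusSign α' = genusSign α := by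
    rw [← genusSign_mul (by omega), genusSign_eq_of_binForm_eq h hαγ h15 hz]
    rcases hα' with rfl | rfl <;> decide
  refine ⟨α', γ', h', hαγ', ?_, ⟨e⟩⟩
  have hsq {m : ℕ} (hm : m = 1 ∨ m = 2) : genusSign m ^ 2 = 1 := by
    rcases hm with rfl | rfl <;> decide
  linear_combination genusSign p * genusSign α * hsq hα' - genusSign α' * hsq hα -
    genusSign α * genusSign α' * hsign

lemma repCount_binForm_one_eq_one {α γ : ℕ} (h : α * γ = 4) (hαγ : α ≤ γ) :
    (repCount (binForm (α : ℤ) 1 γ) 1 : ℤ) = 1 + genusSign α := by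
  have hα := eq_one_or_eq_two_of_mul_eq_four h hαγ
  have hset (z : ℤ × ℤ) : binForm (α : ℤ) 1 γ z = 1 ↔ z.2 = 0 ∧ (α : ℤ) * z.1 ^ 2 = 1 := by
    constructor
    · intro hz
      have hsq := four_mul_mul_binForm (α : ℤ) 1 γ z
      rw [hz, discrim_one_of_mul_eq_four (mod_cast h)] at hsq
      have hy2 : z.2 ^ 2 < 1 := by
        have : (α : ℤ) ≤ 2 := by omega
        nlinarith [sq_nonneg (2 * α * z.1 + 1 * z.2)]
      have hy : z.2 = 0 := Int.abs_lt_one_iff.1 ((sq_lt_one_iff_abs_lt_one _).1 hy2)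
      rw [binForm_apply, hy] at hz
      exact ⟨hy, by linarith⟩
    · rintro ⟨hy, hx⟩
      rw [binForm_apply, hy]
      linarith
  rw [repCount, Nat.cast_one]
  simp only [hset]
  rcases hα with rfl | rfl
  · have : {z : ℤ × ℤ | z.2 = 0 ∧ ((1 : ℕ) : ℤ) * z.1 ^ 2 = 1} = {(1, 0), (-1, 0)} := by
      ext ⟨x, y⟩
      simp [and_or_left, and_comm]
    rw [this, Set.ncard_pair (by decide)]
    decide
  · have : {z : ℤ × ℤ | z.2 = 0 ∧ ((2 : ℕ) : ℤ) * z.1 ^ 2 = 1} = ∅ := by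
      refine Set.eq_empty_of_forall_notMem fun z hz ↦ ?_
      have := hz.2
      omega
    rw [this, Set.ncard_empty]
    decide

theorem repCount_binForm_one {α γ : ℕ} (h : α * γ = 4) (hαγ : α ≤ γ) {n : ℕ} (hn : n ≠ 0) :
    (repCount (binForm (α : ℤ) 1 γ) n : ℤ) = dedekindCoeff n + genusSign α * genusCoeff n := by
  induction n using Nat.strong_induction_on generalizing α γ with
  | _ n ih =>
  rcases eq_or_ne n 1 with rfl | hn1
  · rw [repCount_binForm_one_eq_one h hαγ]
    simp [dedekindCoeff, genusCoeff, LSeries.convolution_def]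
  obtain ⟨p, hp, m, rfl⟩ := Nat.exists_prime_and_dvd hn1
  have : Fact p.Prime := ⟨hp⟩
  have hm : m ≠ 0 := right_ne_zero_of_mul hn
  have hlt : m < p * m := lt_mul_of_one_lt_left (Nat.pos_of_ne_zero hm) hp.one_lt
  obtain ⟨a, b, c, ha, hD, hequiv⟩ := exists_equivalent_binForm_not_dvd (p := (p : ℤ)) (a := α)
    (b := 1) (c := γ) fun hdvd ↦ (Nat.prime_iff_prime_int.1 hp).not_dvd_one hdvd.2.1
  rw [discrim_one_of_mul_eq_four (mod_cast h)] at hD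
  have hneighbor (t : ZMod p) (ht : t ∈ quadraticRoots (a : ZMod p) b c) :
      (repCount (neighborForm a b c p t.val) m : ℤ) =
        dedekindCoeff m + genusSign p * genusSign α * genusCoeff m := by
    obtain ⟨α', γ', h', hαγ', hsign, hequiv'⟩ :=
      exists_equivalent_neighborForm h hαγ hequiv hD (dvd_of_mem_quadraticRoots ht)
    rw [repCount_eq_of_equivalent hequiv', ih m hlt h' hαγ' hm, hsign]
  have hdilate : ((dilate p (repCount (binForm (α : ℤ) 1 γ)) m : ℕ) : ℤ) =
      dilate p dedekindCoeff m + genusSign α * dilate p genusCoeff m := by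
    refine natCast_dilate_eq fun hpm ↦ ih (m / p) ?_ h hαγ ?_
    · exact (Nat.div_le_self m p).trans_lt hlt
    · exact (Nat.div_pos (Nat.le_of_dvd (Nat.pos_of_ne_zero hm) hpm) hp.pos).ne'
  have hrec := repCount_prime_mul (posDef_of_equivalent hequiv (binForm_one_posDef h)) ha m
  rw [sum_congr rfl hneighbor, sum_const, nsmul_eq_mul, card_quadraticRoots_of_discrim_eq hD ha,
    ← repCount_eq_of_equivalent hequiv, hdilate] at hrec
  linear_combination hrec - dedekindCoeff_prime_mul hp m -
    genusSign α * genusCoeff_prime_mul hp m +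
    genusSign α * genusCoeff m * one_add_mul_genusSign p

lemma repCount_binForm_one_zero_fifteen (n : ℕ) :
    repCount (binForm (1 : ℤ) 0 15) n =
      {z : ℤ × ℤ | binForm (1 : ℤ) 1 4 z = n ∧ 2 ∣ z.2}.ncard := by
  have hinj : Function.Injective fun z : ℤ × ℤ ↦ (z.1 - z.2, 2 * z.2) := by
    rintro ⟨x, y⟩ ⟨x', y'⟩ h
    obtain ⟨hx, hy⟩ := Prod.ext_iff.1 h
    ext <;> simp only at hx hy ⊢ <;> omega
  have happly (z : ℤ × ℤ) : binForm (1 : ℤ) 1 4 (z.1 - z.2, 2 * z.2) = binForm 1 0 15 z := by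
    simp only [binForm_apply]
    ring
  rw [repCount, ← Set.ncard_image_of_injective _ hinj]
  congr 1
  ext ⟨x, y⟩
  constructor
  · rintro ⟨z, hz, hxy⟩
    rw [← hxy]
    exact ⟨(happly z).trans hz, dvd_mul_right _ _⟩
  · rintro ⟨hz, v, rfl⟩
    refine ⟨(x + v, v), ?_, by simp⟩
    simpa [← happly] using hz

lemma two_dvd_binForm_one_four {z : ℤ × ℤ} (hz : ¬2 ∣ z.2) : 2 ∣ binForm 1 1 4 z := by
  rw [← even_iff_two_dvd] at hz ⊢
  rw [binForm_apply]
  have : Even (4 : ℤ) := by decide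
  by_cases hx : Even z.1 <;> simp [Int.even_add, Int.even_mul, Int.even_pow, hx, hz, this]

theorem repCount_binForm_one_zero_fifteen_eq {n : ℕ} (hn : n ≠ 0) :
    (repCount (binForm (1 : ℤ) 0 15) n : ℤ) =
      (dedekindCoeff n - 2 * dilate 2 dedekindCoeff n + 2 * dilate 4 dedekindCoeff n) +
        (genusCoeff n + 2 * dilate 2 genusCoeff n + 2 * dilate 4 genusCoeff n) := by
  have hgenus : genusSign 1 = 1 := by decide
  have hcount {m : ℕ} (hm : m ≠ 0) :
      (repCount (binForm (1 : ℤ) 1 4) m : ℤ) = dedekindCoeff m + genusSign 1 * genusCoeff m :=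
    mod_cast repCount_binForm_one (α := 1) (γ := 4) rfl (by norm_num) hm
  rw [repCount_binForm_one_zero_fifteen]
  by_cases h2 : 2 ∣ n
  · obtain ⟨m, rfl⟩ := h2
    have hdilate : ((dilate 2 (repCount (binForm (1 : ℤ) 1 4)) m : ℕ) : ℤ) =
        dilate 2 dedekindCoeff m + genusSign 1 * dilate 2 genusCoeff m :=
      natCast_dilate_eq fun (h : 2 ∣ m) ↦ hcount (m := m / 2) (by omega)
    have h3 : legendreHom 3 2 = -1 := by decide
    have h5 : legendreHom 5 2 = -1 := by decide
    have hA := dedekindCoeff_prime_mul Nat.prime_two m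
    have hB := genusCoeff_prime_mul Nat.prime_two m
    rw [h3, h5] at hA hB
    have h4 (f : ℕ → ℤ) : dilate 4 f (2 * m) = dilate 2 f m := dilate_mul_mul two_ne_zero 2 f m
    have := ncard_binForm_eq_and_dvd_snd (a := 1) (b := 1) (c := 4) Nat.prime_two (by decide) m
    push_cast at this ⊢
    rw [this, hdilate, hgenus, h4, h4, dilate_mul two_ne_zero, dilate_mul two_ne_zero]
    linear_combination -hA - hB
  · have h4 : ¬4 ∣ n := by omega
    simp only [dilate_of_not_dvd h2, dilate_of_not_dvd h4]
    have hset : {z : ℤ × ℤ | binForm (1 : ℤ) 1 4 z = n ∧ 2 ∣ z.2} =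
        {z | binForm (1 : ℤ) 1 4 z = n} := by
      ext z
      refine and_iff_left_of_imp fun hz ↦ of_not_not fun hy ↦ h2 ?_
      rw [← Int.natCast_dvd_natCast, ← hz]
      exact two_dvd_binForm_one_four hy
    rw [hset, ← repCount, hcount hn, hgenus]
    ring

end RepresentationNumbers

/-! ### Dirichlet series -/

section LSeries

open scoped LSeries.notation

variable {f g : ℕ → ℤ} {s a b : ℂ}

lemma hasSum_comp_fiber {α E : Type*} [AddCommMonoid E] [TopologicalSpace E] {N : α → ℕ} {n : ℕ}
    (hfin : n ≠ 0 → (N ⁻¹' {n}).Finite) {F : ℕ → E} (hF : F 0 = 0) :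
    HasSum (fun x : {x // N x = n} ↦ F (N x)) ((N ⁻¹' {n}).ncard • F n) := by
  have hconst : (fun x : {x // N x = n} ↦ F (N x)) = fun _ ↦ F n := funext fun x ↦ by rw [x.2]
  rw [hconst]
  rcases eq_or_ne n 0 with rfl | hn
  · simp [hF]
  · have : Fintype {x // N x = n} := (hfin hn).fintype
    convert hasSum_fintype fun _ : {x // N x = n} ↦ F n
    rw [sum_const, card_univ, ← Nat.card_eq_fintype_card]
    rfl

theorem hasSum_term_comp {α : Type*} {N : α → ℕ} (hfin : ∀ n ≠ 0, (N ⁻¹' {n}).Finite)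
    (h : LSeriesHasSum (fun n ↦ ((N ⁻¹' {n}).ncard : ℂ)) s a) :
    HasSum (fun x ↦ LSeries.term 1 s (N x)) a := by
  have hterm (n : ℕ) : LSeries.term (fun n ↦ ((N ⁻¹' {n}).ncard : ℂ)) s n =
      (N ⁻¹' {n}).ncard • LSeries.term 1 s n := by
    rcases eq_or_ne n 0 with rfl | hn
    · simp
    · simp [LSeries.term_of_ne_zero hn, div_eq_mul_inv]
  rw [LSeriesHasSum, funext hterm] at h
  have hnorm (n : ℕ) : HasSum (fun x : {x // N x = n} ↦ ‖LSeries.term 1 s (N x)‖)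
      ((N ⁻¹' {n}).ncard • ‖LSeries.term 1 s n‖) :=
    hasSum_comp_fiber (hfin n) (F := fun n ↦ ‖LSeries.term 1 s n‖) (by simp)
  rw [← (Equiv.sigmaFiberEquiv N).hasSum_iff]
  refine h.sigma_of_hasSum (fun n ↦ hasSum_comp_fiber (hfin n) (LSeries.term_zero ..)) ?_
  refine .of_norm ((summable_sigma_of_nonneg fun _ ↦ norm_nonneg _).2
    ⟨fun n ↦ (hnorm n).summable, ?_⟩)
  convert h.summable.norm using 2 with n
  rw [nsmul_eq_mul, norm_mul, Complex.norm_natCast, ← nsmul_eq_mul]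
  exact (hnorm n).tsum_eq

theorem hasSum_one_div_cpow_of_repCount {M : Type*} [AddCommGroup M]
    {Q : QuadraticForm ℤ M} (hQ : Q.PosDef) (hfin : ∀ n : ℕ, {z | Q z = n}.Finite)
    (h : LSeriesHasSum (fun n ↦ (repCount Q n : ℂ)) s a) :
    HasSum (fun z : {z : M // z ≠ 0} ↦ 1 / (Q z : ℂ) ^ s) a := by
  have hfiber {n : ℕ} (hn : n ≠ 0) : (fun z ↦ (Q z).toNat) ⁻¹' {n} = {z | Q z = n} := by
    ext z
    simp only [Set.mem_preimage, Set.mem_singleton_iff, Set.mem_ofPred_eq]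
    omega
  have hsum : HasSum (fun z ↦ LSeries.term 1 s (Q z).toNat) a := by
    refine hasSum_term_comp (fun n hn ↦ hfiber hn ▸ hfin n) ?_
    rwa [LSeriesHasSum_congr s a fun {n} hn ↦ by rw [hfiber hn, ← repCount]]
  have hsupp : Function.support (fun z ↦ LSeries.term 1 s (Q z).toNat) ⊆ {z | z ≠ 0} := by
    rintro _ hz rfl
    simp at hz
  have hval (z : {z : M // z ≠ 0}) : 1 / (Q z : ℂ) ^ s = LSeries.term 1 s (Q z).toNat := by
    have hz : 0 < Q z := hQ z z.2
    have hcast : (((Q z).toNat : ℤ) : ℂ) = Q z := by rw [Int.toNat_of_nonneg hz.le]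
    rw [LSeries.term_of_ne_zero (by omega), ← hcast, Int.cast_natCast, Pi.one_apply]
  rw [funext hval]
  exact (hasSum_subtype_iff_of_support_subset hsupp).2 hsum

lemma LSeriesHasSum_dilate {f : ℕ → ℂ} {k : ℕ} (hk : k ≠ 0) (h : LSeriesHasSum f s a) :
    LSeriesHasSum (dilate k f) s (k ^ (-s) * a) := by
  have hinj : Function.Injective (k * ·) := mul_right_injective₀ hk
  have hterm (n : ℕ) :
      LSeries.term (dilate k f) s (k * n) = (k : ℂ) ^ (-s) * LSeries.term f s n := by
    rcases eq_or_ne n 0 with rfl | hn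
    · simp
    rw [LSeries.term_of_ne_zero (mul_ne_zero hk hn), LSeries.term_of_ne_zero hn, dilate_mul hk,
      Nat.cast_mul, Complex.natCast_mul_natCast_cpow, Complex.cpow_neg]
    field_simp
  rw [LSeriesHasSum, ← hinj.hasSum_iff]
  · simpa only [Function.comp_def, hterm] using h.mul_left _
  · intro n hn
    rw [LSeries.term_def, dilate_of_not_dvd fun ⟨m, hm⟩ ↦ hn ⟨m, hm.symm⟩]
    simp

lemma dilate_intCast {R : Type*} [AddGroupWithOne R] (k : ℕ) (f : ℕ → ℤ) (n : ℕ) :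
    dilate k (fun n ↦ (f n : R)) n = dilate k f n := by
  simp only [dilate]
  split_ifs <;> simp

lemma LSeriesHasSum_intCast_convolution (hf : LSeriesHasSum (fun n ↦ (f n : ℂ)) s a)
    (hg : LSeriesHasSum (fun n ↦ (g n : ℂ)) s b) :
    LSeriesHasSum (fun n ↦ ((f ⍟ g) n : ℂ)) s (a * b) := by
  convert hf.convolution hg using 2 with n
  simp [LSeries.convolution_def]

lemma LSeriesHasSum_LSer {χ : ℕ → ℤ} (hχ : ∀ n, |χ n| ≤ 1) (hs : 1 < s.re) :
    LSeriesHasSum (fun n ↦ (χ n : ℂ)) s (LSer χ s) := by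
  have hsum : LSeriesSummable (fun n ↦ (χ n : ℂ)) s := by
    refine LSeriesSummable_of_bounded_of_one_lt_re (m := 1) (fun n _ ↦ ?_) hs
    rw [Complex.norm_intCast]
    exact mod_cast hχ n
  convert hsum.LSeriesHasSum
  rw [LSeries, hsum.tsum_eq_zero_add, LSeries.term_zero, zero_add, LSer]
  simp

end LSeries

section Characters

variable {s : ℂ}

lemma abs_chiNeg3_le_one (n : ℕ) : |chiNeg3 n| ≤ 1 := by
  rw [chiNeg3]
  split_ifs <;> simp

lemma abs_chi5_le_one (n : ℕ) : |chi5 n| ≤ 1 := by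
  rw [chi5]
  split_ifs <;> simp

lemma abs_chiNeg15_le_one (n : ℕ) : |chiNeg15 n| ≤ 1 := by
  rw [chiNeg15, abs_mul]
  exact mul_le_one₀ (abs_chiNeg3_le_one n) (abs_nonneg _) (abs_chi5_le_one n)

lemma LSeriesHasSum_dedekindCoeff (hs : 1 < s.re) :
    LSeriesHasSum (fun n ↦ (dedekindCoeff n : ℂ)) s (riemannZeta s * LSer chiNeg15 s) := by
  have hχ : chiNeg15 = ⇑(legendreHom 3 * legendreHom 5) := by
    ext n
    rw [chiNeg15, chiNeg3_eq_legendreHom, chi5_eq_legendreHom, MonoidHom.mul_apply]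
  rw [dedekindCoeff, ← hχ]
  refine LSeriesHasSum_intCast_convolution ?_ (LSeriesHasSum_LSer abs_chiNeg15_le_one hs)
  convert LSeriesHasSum_one hs
  simp

lemma LSeriesHasSum_genusCoeff (hs : 1 < s.re) :
    LSeriesHasSum (fun n ↦ (genusCoeff n : ℂ)) s (LSer chiNeg3 s * LSer chi5 s) := by
  rw [genusCoeff, ← chiNeg3_eq_legendreHom, ← chi5_eq_legendreHom]
  exact LSeriesHasSum_intCast_convolution (LSeriesHasSum_LSer abs_chiNeg3_le_one hs)
    (LSeriesHasSum_LSer abs_chi5_le_one hs)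

lemma two_cpow_one_sub (s : ℂ) : (2 : ℂ) ^ (1 - s) = 2 * 2 ^ (-s) := by
  rw [sub_eq_add_neg, Complex.cpow_add _ _ two_ne_zero, Complex.cpow_one]

lemma two_cpow_one_sub_two_mul (s : ℂ) : (2 : ℂ) ^ (1 - 2 * s) = 2 * 4 ^ (-s) := by
  have h4 : (4 : ℂ) ^ (-s) = 2 ^ (-s) * 2 ^ (-s) := by
    simpa [show (2 : ℂ) * 2 = 4 by norm_num] using Complex.natCast_mul_natCast_cpow 2 2 (-s)
  rw [h4, ← Complex.cpow_add _ _ two_ne_zero, ← two_mul, two_cpow_one_sub, mul_neg]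

theorem LSeriesHasSum_repCount_binForm_one_zero_fifteen (hs : 1 < s.re) :
    LSeriesHasSum (fun n ↦ (repCount (binForm (1 : ℤ) 0 15) n : ℂ)) s
      ((1 - 2 ^ (1 - s) + 2 ^ (1 - 2 * s)) * riemannZeta s * LSer chiNeg15 s +
        (1 + 2 ^ (1 - s) + 2 ^ (1 - 2 * s)) * LSer chiNeg3 s * LSer chi5 s) := by
  have hD := LSeriesHasSum_dedekindCoeff hs
  have hG := LSeriesHasSum_genusCoeff hs
  have hsum := ((hD.sub ((LSeriesHasSum_dilate two_ne_zero hD).smul 2)).add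
    ((LSeriesHasSum_dilate four_ne_zero hD).smul 2)).add
      ((hG.add ((LSeriesHasSum_dilate two_ne_zero hG).smul 2)).add
        ((LSeriesHasSum_dilate four_ne_zero hG).smul 2))
  rw [two_cpow_one_sub, two_cpow_one_sub_two_mul]
  convert (LSeriesHasSum_congr s _ fun {n} hn ↦ ?_).1 hsum using 1
  · push_cast
    ring
  · rw [← Int.cast_natCast, repCount_binForm_one_zero_fifteen_eq hn]
    simp [dilate_intCast]

end Characters

/-- Zucker–Robertson: for `Re(s) > 1`,
`Q(1,0,15; s) = (1 − 2^{1−s} + 2^{1−2s}) ζ(s) L(χ₋₁₅, s) + (1 + 2^{1−s} + 2^{1−2s}) L(χ₋₃, s) L(χ₅, s)`. -/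
theorem Q1015_eq (s : ℂ) (hs : 1 < s.re) :
    (∑' p : {p : ℤ × ℤ // p ≠ 0},
        1 / (((p.1.1 : ℂ) ^ 2 + 15 * (p.1.2 : ℂ) ^ 2) ^ s)) =
      (1 - (2 : ℂ) ^ (1 - s) + (2 : ℂ) ^ (1 - 2 * s)) * riemannZeta s * LSer chiNeg15 s +
        (1 + (2 : ℂ) ^ (1 - s) + (2 : ℂ) ^ (1 - 2 * s)) * LSer chiNeg3 s * LSer chi5 s := by
  have hpos : (binForm (1 : ℤ) 0 15).PosDef := by
    rw [binForm_posDef_iff]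
    norm_num [discrim]
  rw [← (hasSum_one_div_cpow_of_repCount hpos (finite_setOf_binForm_eq hpos ·)
    (LSeriesHasSum_repCount_binForm_one_zero_fifteen hs)).tsum_eq]
  simp [binForm_apply]
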